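/- Let (A, φ) be a noncommutative probability space, let Φ̃ : H_S(A) → ℂ be the character extending φ, and set Φ̂ = Φ̃ − ε_A. Then for every n ≥ 1, every Schröder tree t ∈ ST(n), every word w = a_1⋯a_n with a_i ∈ A, and every k ≥ 1, the k-fold convolution power satisfies Φ̂^{*k}(t ⊗ w) = ω_k(sk(t)) · φ_{π(t)}(a_1,…,a_n). -/

import Mathlib

open scoped BigOperators

/-- Planar rooted trees (rose trees). -/
inductive PTree : Type
  | node : List PTree → PTree

namespace PTree

/-- The single-vertex tree (a leaf). -/
abbrev leaf : PTree := .node []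

/-- Subtree at a given path from the root (entries select children). -/
def subtreeAt : List ℕ → PTree → Option PTree
  | [], t => some t
  | i :: p, node cs => (cs[i]?).bind (subtreeAt p)

/-- `p` is (the path of) a vertex of `t`. -/
def IsVertex (t : PTree) (p : List ℕ) : Prop := (subtreeAt p t).isSome

/-- `p` is a leaf of `t`. -/
def IsLeafAt (t : PTree) (p : List ℕ) : Prop := subtreeAt p t = some leaf

/-- `p` is an internal (non-leaf) vertex of `t`. -/
def IsInternalAt (t : PTree) (p : List ℕ) : Prop :=
  ∃ cs, subtreeAt p t = some (node cs) ∧ cs ≠ []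

/-- Schröder trees: every internal vertex has at least two children. -/
inductive IsSchroder : PTree → Prop
  | leaf : IsSchroder (node [])
  | node (cs : List PTree) : 2 ≤ cs.length → (∀ c ∈ cs, IsSchroder c) → IsSchroder (node cs)

/-- Number of leaves of a tree. -/
noncomputable def numLeaves (t : PTree) : ℕ := Nat.card {p : List ℕ // IsLeafAt t p}

/-- Number of sectors between consecutive leaves. -/
noncomputable def numSectors (t : PTree) : ℕ := numLeaves t - 1

/-- Number of internal vertices. -/
noncomputable def numInternal (t : PTree) : ℕ := Nat.card {p : List ℕ // IsInternalAt t p}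

/-- The set of Schröder trees with `n+1` leaves. -/
def ST (n : ℕ) : Set PTree := {t | IsSchroder t ∧ numLeaves t = n + 1}

/-- Number of surjective strictly order-preserving maps from the poset of internal
vertices of `t` (i.e. the vertex poset of the skeleton `sk(t)`, with the root minimal,
the order being the ancestor/prefix order) onto `{1, …, k}`. This is `ω_k(sk(t))`. -/
noncomputable def omegaSkK (t : PTree) (k : ℕ) : ℕ :=
  Nat.card {f : {p : List ℕ // IsInternalAt t p} → Fin k //
    Function.Surjective f ∧ ∀ v w, v.1 <+: w.1 → v ≠ w → f v < f w}

/-- The Murua coefficient `ω(sk(t))` of the skeleton of `t`. -/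
noncomputable def omegaSk (t : PTree) : ℂ :=
  ∑ k ∈ Finset.Icc 1 (numInternal t), ((-1 : ℂ) ^ (k + 1) / (k : ℂ)) * (omegaSkK t k : ℂ)

/-- The subtree of `t` at path `p` (junk value: a leaf). -/
noncomputable def subtree! (t : PTree) (p : List ℕ) : PTree := (subtreeAt p t).getD leaf

/-- Number of leaves of `t` strictly to the left of the subtree at `p`. -/
noncomputable def leavesBefore (t : PTree) (p : List ℕ) : ℕ :=
  Nat.card {q : List ℕ // IsLeafAt t q ∧ List.Lex (· < ·) q p ∧ ¬ p <+: q}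

/-- Sector number `i` (0-indexed: the sector between the `(i+1)`-st and `(i+2)`-nd leaves of `t`)
lies strictly inside the subtree of `t` rooted at `p`. -/
def SectorIn (t : PTree) (p : List ℕ) (i : ℕ) : Prop :=
  leavesBefore t p ≤ i ∧ i + 2 ≤ leavesBefore t p + numLeaves (subtree! t p)

/-- The internal vertex `v` of `t` owns sector `i`: the sector lies in the corolla at `v`,
i.e. inside the subtree at `v` but not inside the subtree at any strictly deeper vertex. -/
def OwnsSector (t : PTree) (v : List ℕ) (i : ℕ) : Prop :=
  IsInternalAt t v ∧ SectorIn t v i ∧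
    ∀ w, IsInternalAt t w → v <+: w → w ≠ v → ¬ SectorIn t w i

/-- Sectors `i` and `j` belong to the same block of the noncrossing partition `π(t)`. -/
def SameOwner (t : PTree) (i j : ℕ) : Prop := ∃ v, OwnsSector t v i ∧ OwnsSector t v j

open Classical in
/-- `φ_{π(t)}(a_1,…,a_n)`: the product over the blocks of the noncrossing partition `π(t)`
(one block per internal vertex `v`, consisting of the sectors owned by `v`) of `φ` applied to
the ordered product of the corresponding letters of `w`. -/
noncomputable def phiPi {A : Type*} [Ring A] (φ : A → ℂ) (t : PTree) (w : List A) : ℂ :=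
  ∏ᶠ v ∈ {v : List ℕ | IsInternalAt t v},
    φ ((((List.range w.length).filter fun i => OwnsSector t v i).map fun i => w.getD i 0).prod)

/-- A corolla: a root whose (at least two) children are all leaves. -/
def corolla (m : ℕ) : PTree := node (List.replicate m leaf)

/-- `t` is a corolla. -/
def IsCorolla (t : PTree) : Prop := ∃ m, 2 ≤ m ∧ t = corolla m

/-- Graft a tree `s` onto the leftmost leaf of `t`. -/
def graftLeftmost : PTree → PTree → PTree
  | node [], s => s
  | node (c :: cs), s => node (graftLeftmost c s :: cs)

/-- Trees obtained from the single-vertex tree by repeatedly grafting a corolla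
onto the leftmost leaf. -/
inductive IsBST : PTree → Prop
  | single : IsBST leaf
  | graft (t : PTree) (m : ℕ) : IsBST t → 2 ≤ m → IsBST (graftLeftmost t (corolla m))

/-- Schröder trees whose leftmost child of the root is a leaf. -/
def IsPST (t : PTree) : Prop := ∃ cs, t = node (leaf :: cs)

end PTree
namespace PTree

mutual
  /-- List of all vertex paths of a tree. -/
  def verticesList : PTree → List (List ℕ)
    | .node cs => [] :: verticesListAux 0 cs
  def verticesListAux : ℕ → List PTree → List (List ℕ)
    | _, [] => []
    | i, c :: cs => (verticesList c).map (i :: ·) ++ verticesListAux (i + 1) cs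
end

open Classical in
/-- The `Finset` of internal vertices of `t`. -/
noncomputable def internalFinset (t : PTree) : Finset (List ℕ) :=
  ((verticesList t).filter fun p => decide (IsInternalAt t p)).toFinset

open Classical in
/-- The admissible cuts of a Schröder tree `t`: sets of internal vertices such that every
path from the root to a leaf contains at most one of them (equivalently, antichains for
the ancestor/prefix order). -/
noncomputable def cutsFinset (t : PTree) : Finset (Finset (List ℕ)) :=
  (internalFinset t).powerset.filter fun c => ∀ v ∈ c, ∀ w ∈ c, v ≠ w → ¬ v <+: w

/-- A vertex path lies on the leftmost branch iff it consists of zeros. -/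
def OnLeftBranch (v : List ℕ) : Prop := v = List.replicate v.length 0

open Classical in
/-- `Adm_≺(t)`: admissible cuts whose trunk contains the leftmost leaf of `t`,
i.e. cuts containing no vertex of the leftmost branch. -/
noncomputable def cutsPrecFinset (t : PTree) : Finset (Finset (List ℕ)) :=
  (cutsFinset t).filter fun c => ∀ v ∈ c, ¬ OnLeftBranch v

open Classical in
/-- `Adm(t) \ Adm_≺(t)`: the admissible cuts containing a vertex of the leftmost branch. -/
noncomputable def cutsSuccFinset (t : PTree) : Finset (Finset (List ℕ)) :=
  (cutsFinset t).filter fun c => ∃ v ∈ c, OnLeftBranch v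

/-- Replace the subtree at a given path by a leaf. -/
def replaceLeaf : List ℕ → PTree → PTree
  | [], _ => leaf
  | i :: p, node cs => node (cs.set i (replaceLeaf p (cs.getD i leaf)))

/-- The vertices of a cut, sorted from left to right. -/
noncomputable def sortCut (t : PTree) (c : Finset (List ℕ)) : List (List ℕ) :=
  c.toList.mergeSort fun v w => Nat.ble (leavesBefore t v) (leavesBefore t w)

/-- The trunk `R_c(t)`: replace the subtree at each vertex of the cut by a leaf. -/
noncomputable def trunkTree (t : PTree) (c : Finset (List ℕ)) : PTree :=
  (sortCut t c).foldl (fun s v => replaceLeaf v s) t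

open Classical in
/-- Sector `i` of `t` is removed by the cut `c` (it lies in one of the pruned subtrees). -/
noncomputable def RemovedIdx (t : PTree) (c : Finset (List ℕ)) (i : ℕ) : Prop :=
  ∃ v ∈ c, leavesBefore t v ≤ i ∧ i < leavesBefore t v + numSectors (subtree! t v)

/-- A decorated forest: a list of Schröder trees, each `t` decorated by a word of length
`numSectors t` labelling the sectors between consecutive leaves from left to right. -/
abbrev DForest (A : Type*) := List (PTree × List A)

/-- A genuine decorated tree: a non-unit Schröder tree with matching decoration. -/
def GoodTree {A : Type*} (d : PTree × List A) : Prop :=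
  IsSchroder d.1 ∧ d.1 ≠ leaf ∧ d.2.length = numSectors d.1

/-- A genuine decorated forest. -/
def GoodForest {A : Type*} (F : DForest A) : Prop := ∀ d ∈ F, GoodTree d

open Classical in
/-- The decoration of the trunk `R_c(t ⊗ w)`: the letters of `w` at the sectors
not removed by the cut, in their original order. -/
noncomputable def trunkWord {A : Type*} [Zero A] (t : PTree) (c : Finset (List ℕ))
    (w : List A) : List A :=
  (((List.range w.length).filter fun i => decide (¬ RemovedIdx t c i)).map fun i => w.getD i 0)

open Classical in
/-- The trunk `R_c(t ⊗ w)` as a decorated forest (empty if the trunk is the unit,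
i.e. the single-leaf tree, which is identified with `1`). -/
noncomputable def trunkPart {A : Type*} [Zero A] (d : PTree × List A)
    (c : Finset (List ℕ)) : DForest A :=
  if trunkTree d.1 c = leaf then [] else [(trunkTree d.1 c, trunkWord d.1 c d.2)]

/-- The pruning `P_c(t ⊗ w)`: the ordered forest of decorated subtrees rooted at the
vertices of the cut (left to right), each carrying the contiguous subword of `w`
decorating its sectors. -/
noncomputable def prunePart {A : Type*} (d : PTree × List A)
    (c : Finset (List ℕ)) : DForest A :=
  (sortCut d.1 c).map fun v =>
    (subtree! d.1 v, (d.2.drop (leavesBefore d.1 v)).take (numSectors (subtree! d.1 v)))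

/-- All splittings `R_c(F) ⊗ P_c(F)` of a decorated forest given by tuples of admissible
cuts (one cut per tree): the combinatorial coproduct `δ_A`. -/
noncomputable def forestSplits {A : Type*} [Zero A] :
    DForest A → List (DForest A × DForest A)
  | [] => [([], [])]
  | d :: ds => (cutsFinset d.1).toList.flatMap fun c =>
      (forestSplits ds).map fun pr => (trunkPart d c ++ pr.1, prunePart d c ++ pr.2)

/-- The splittings appearing in `δ_{≺,A}`: the first tree is cut along `Adm_≺`, the
remaining ones along all admissible cuts. -/
noncomputable def forestSplitsPrec {A : Type*} [Zero A] :
    DForest A → List (DForest A × DForest A)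
  | [] => []
  | d :: ds => (cutsPrecFinset d.1).toList.flatMap fun c =>
      (forestSplits ds).map fun pr => (trunkPart d c ++ pr.1, prunePart d c ++ pr.2)

/-- The splittings appearing in `δ_{≻,A} = δ_A − δ_{≺,A}`. -/
noncomputable def forestSplitsSucc {A : Type*} [Zero A] :
    DForest A → List (DForest A × DForest A)
  | [] => []
  | d :: ds => (cutsSuccFinset d.1).toList.flatMap fun c =>
      (forestSplits ds).map fun pr => (trunkPart d c ++ pr.1, prunePart d c ++ pr.2)

/-- The convolution product `f * g = m_ℂ ∘ (f ⊗ g) ∘ δ_A` of linear functionals on the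
Hopf algebra `H_S(A)` of decorated Schröder trees (described on the basis of decorated
forests). -/
noncomputable def convD {A : Type*} [Zero A] (f g : DForest A → ℂ) : DForest A → ℂ :=
  fun F => ((forestSplits F).map fun pr => f pr.1 * g pr.2).sum

/-- The left half-shuffle product `f ≺̃ g = m_ℂ ∘ (f ⊗ g) ∘ δ_{≺,A}`. -/
noncomputable def precD {A : Type*} [Zero A] (f g : DForest A → ℂ) : DForest A → ℂ :=
  fun F => ((forestSplitsPrec F).map fun pr => f pr.1 * g pr.2).sum

/-- The right half-shuffle product `f ≻̃ g = m_ℂ ∘ (f ⊗ g) ∘ δ_{≻,A}`. -/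
noncomputable def succD {A : Type*} [Zero A] (f g : DForest A → ℂ) : DForest A → ℂ :=
  fun F => ((forestSplitsSucc F).map fun pr => f pr.1 * g pr.2).sum

open Classical in
/-- The counit `ε_A` of `H_S(A)` as a functional. -/
noncomputable def epsD {A : Type*} : DForest A → ℂ := fun F => if F = [] then 1 else 0

open Classical in
/-- The character `Φ̃ : H_S(A) → ℂ` extending `φ`: it sends a decorated tree `t ⊗ w` to
`φ(a_1 ⋯ a_n)` if `t` is a corolla and to `0` otherwise, multiplicatively on forests. -/
noncomputable def charD {A : Type*} [Ring A] (φ : A → ℂ) : DForest A → ℂ :=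
  fun F => (F.map fun d => if IsCorolla d.1 then φ d.2.prod else 0).prod

/-- `Φ̂ = Φ̃ − ε_A`. -/
noncomputable def charHatD {A : Type*} [Ring A] (φ : A → ℂ) : DForest A → ℂ :=
  fun F => charD φ F - epsD F

/-- Convolution powers `f^{*k}` (with `f^{*0} = ε_A`). -/
noncomputable def convPowD {A : Type*} [Zero A] (f : DForest A → ℂ) : ℕ → DForest A → ℂ
  | 0 => epsD
  | k + 1 => convD f (convPowD f k)

/-- Left half-shuffle powers `α^{≺̃ k}`, with `α^{≺̃ 0} = ε_A` and
`α^{≺̃ k} = α ≺̃ α^{≺̃ (k−1)}`. -/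
noncomputable def precPowD {A : Type*} [Zero A] (α : DForest A → ℂ) : ℕ → DForest A → ℂ
  | 0 => epsD
  | k + 1 => precD α (precPowD α k)

/-- Right half-shuffle powers `α^{≻̃ k}`, with `α^{≻̃ 0} = ε_A` and
`α^{≻̃ k} = α^{≻̃ (k−1)} ≻̃ α`. -/
noncomputable def succPowD {A : Type*} [Zero A] (α : DForest A → ℂ) : ℕ → DForest A → ℂ
  | 0 => epsD
  | k + 1 => succD (succPowD α k) α

/-- The left half-shuffle exponential `E_≺̃(α) = Σ_{k ≥ 0} α^{≺̃ k}`. -/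
noncomputable def ePrecD {A : Type*} [Zero A] (α : DForest A → ℂ) : DForest A → ℂ :=
  fun F => ∑ᶠ k : ℕ, precPowD α k F

/-- The right half-shuffle exponential `E_≻̃(α) = Σ_{k ≥ 0} α^{≻̃ k}`. -/
noncomputable def eSuccD {A : Type*} [Zero A] (α : DForest A → ℂ) : DForest A → ℂ :=
  fun F => ∑ᶠ k : ℕ, succPowD α k F

/-- The convolution exponential `exp^*(α) = Σ_{k ≥ 0} α^{*k} / k!`. -/
noncomputable def expStarD {A : Type*} [Zero A] (α : DForest A → ℂ) : DForest A → ℂ :=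
  fun F => ∑ᶠ k : ℕ, ((k.factorial : ℂ))⁻¹ * convPowD α k F

/-- The convolution logarithm `log^*(Φ̃) = Σ_{k ≥ 1} ((−1)^{k+1}/k) (Φ̃ − ε_A)^{*k}`. -/
noncomputable def logStarD {A : Type*} [Ring A] (φ : A → ℂ) : DForest A → ℂ :=
  fun F => ∑ᶠ k ∈ Set.Ici (1 : ℕ), ((-1 : ℂ) ^ (k + 1) / (k : ℂ)) * convPowD (charHatD φ) k F

/-- An infinitesimal character of `H_S(A)`: it vanishes on the unit (empty forest) and on
products of two or more nonempty forests. -/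
def IsInfCharD {A : Type*} (α : DForest A → ℂ) : Prop :=
  α [] = 0 ∧ ∀ F G : DForest A, F ≠ [] → G ≠ [] → α (F ++ G) = 0

end PTree

/-!
The value of the character `Φ̃` on a trunk vanishes unless the trunk is empty or a corolla, so only
two admissible cuts contribute to `(Φ̃ * g) (t ⊗ w)`: the cut at the root and the cut at all the
internal children of the root. For `g = Φ̃^{*k}` this is the recursion in `k` of the strict order
polynomial `Ω°(sk(t), k)` of a root placed below a disjoint union, and the trunk of the second cut
carries the block of `π(t)` at the root; hence `Φ̃^{*k}(t ⊗ w) = Ω°(sk(t), k) φ_{π(t)}(w)`.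
Expanding `Φ̃ = ε_A + Φ̂` gives `Φ̃^{*k} = ∑ j, (k choose j) Φ̂^{*j}`, while sorting strict maps by
their range gives `Ω°(sk(t), k) = ∑ j, (k choose j) ω_j(sk(t))`; binomial inversion compares them.
-/

section StrictOrderPolynomial

/-- Strictly order-preserving maps, bundled as homomorphisms of the strict orders so that they can
be transported along order isomorphisms. -/
abbrev StrictMap (X Y : Type*) [LT X] [LT Y] : Type _ :=
  ((· < ·) : X → X → Prop) →r ((· < ·) : Y → Y → Prop)

instance (X Y : Type*) [LT X] [LT Y] [Finite X] [Finite Y] : Finite (StrictMap X Y) :=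
  DFunLike.finite _

/-- The strict order polynomial `Ω°(X, k)`: the number of strictly order-preserving maps from `X`
to the chain with `k` elements. -/
noncomputable def strictOrderPoly (X : Type*) [LT X] (k : ℕ) : ℕ :=
  Nat.card (StrictMap X (Fin k))

/-- The number `ω_k(X)` of surjective strictly order-preserving maps from `X` onto the chain with
`k` elements. -/
noncomputable def strictSurjCount (X : Type*) [LT X] (k : ℕ) : ℕ :=
  Nat.card {f : StrictMap X (Fin k) // Function.Surjective f}

theorem strictOrderPoly_congr {X Y : Type*} [Preorder X] [Preorder Y] (e : X ≃o Y) (k : ℕ) :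
    strictOrderPoly X k = strictOrderPoly Y k :=
  Nat.card_congr (RelIso.relHomCongr e.toRelIsoLT (RelIso.refl _))

theorem strictOrderPoly_of_isEmpty (X : Type*) [LT X] [IsEmpty X] (k : ℕ) :
    strictOrderPoly X k = 1 := by
  have : Unique (StrictMap X (Fin k)) :=
    ⟨⟨⟨isEmptyElim, fun {x} => isEmptyElim x⟩⟩, fun f => RelHom.ext isEmptyElim⟩
  exact Nat.card_unique

theorem strictOrderPoly_zero (X : Type*) [LT X] [Nonempty X] : strictOrderPoly X 0 = 0 := by
  have : IsEmpty (StrictMap X (Fin 0)) := ⟨fun f => (f (Classical.arbitrary X)).elim0⟩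
  exact Nat.card_of_isEmpty

/-- The universal property of the disjoint union of ordered sets. -/
def StrictMap.sigmaEquiv {ι : Type*} (X : ι → Type*) (Y : Type*) [∀ i, LT (X i)] [LT Y] :
    StrictMap (Σ i, X i) Y ≃ ∀ i, StrictMap (X i) Y where
  toFun f i := ⟨fun x => f ⟨i, x⟩, fun h => f.map_rel (Sigma.mk_lt_mk_iff.2 h)⟩
  invFun g := ⟨fun x => g x.1 x.2, by
    rintro _ _ ⟨i, x, y, h⟩
    exact (g i).map_rel h⟩
  left_inv _ := rfl
  right_inv _ := rfl

theorem strictOrderPoly_sigma {ι : Type*} [Fintype ι] (X : ι → Type*) [∀ i, LT (X i)]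
    (k : ℕ) : strictOrderPoly (Σ i, X i) k = ∏ i, strictOrderPoly (X i) k := by
  simp only [strictOrderPoly, ← Nat.card_pi]
  exact Nat.card_congr (StrictMap.sigmaEquiv X (Fin k))

/-- A strict map into `WithBot Y` avoiding `⊥` is a strict map into `Y`. -/
def StrictMap.neBotEquiv (X Y : Type*) [LT X] [LT Y] :
    {f : StrictMap X (WithBot Y) // ∀ x, f x ≠ ⊥} ≃ StrictMap X Y where
  toFun f := ⟨fun x => (f.1 x).unbot (f.2 x), fun h => by
    rw [← WithBot.coe_lt_coe, WithBot.coe_unbot, WithBot.coe_unbot]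
    exact f.1.map_rel h⟩
  invFun g := ⟨⟨fun x => (g x : WithBot Y), fun h => WithBot.coe_lt_coe.2 (g.map_rel h)⟩,
    fun _ => WithBot.coe_ne_bot⟩
  left_inv f := by ext x; simp
  right_inv g := by ext x; simp

theorem StrictMap.apply_coe_ne_bot {X Y : Type*} [LT X] [Preorder Y]
    (f : StrictMap (WithBot X) (WithBot Y)) (x : X) : f x ≠ ⊥ :=
  ne_bot_of_gt (f.map_rel (WithBot.bot_lt_coe x))

/-- A strict map `WithBot X → WithBot Y` preserving `⊥` is determined by its restriction to `X`,
which avoids `⊥`. -/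
def StrictMap.mapBotEquiv (X Y : Type*) [LT X] [Preorder Y] :
    {f : StrictMap (WithBot X) (WithBot Y) // f ⊥ = ⊥} ≃
      {f : StrictMap X (WithBot Y) // ∀ x, f x ≠ ⊥} where
  toFun f := ⟨⟨fun x => f.1 x, fun h => f.1.map_rel (WithBot.coe_lt_coe.2 h)⟩,
    f.1.apply_coe_ne_bot⟩
  invFun g := ⟨⟨WithBot.recBotCoe ⊥ g.1, fun {x y} h => by
    induction y with
    | bot => exact absurd h (WithBot.not_lt_bot _)
    | coe y =>
      induction x with
      | bot => exact WithBot.bot_lt_iff_ne_bot.2 (g.2 y)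
      | coe x => exact g.1.map_rel (WithBot.coe_lt_coe.1 h)⟩, rfl⟩
  left_inv f := by
    ext x : 2
    cases x with
    | bot => exact f.2.symm
    | coe x => rfl
  right_inv _ := rfl

theorem StrictMap.forall_ne_bot_iff {X Y : Type*} [LT X] [Preorder Y]
    (f : StrictMap (WithBot X) (WithBot Y)) : (∀ x, f x ≠ ⊥) ↔ f ⊥ ≠ ⊥ := by
  refine ⟨fun h => h ⊥, fun h x => ?_⟩
  cases x with
  | bot => exact h
  | coe x => exact f.apply_coe_ne_bot x

/-- The chain with `k + 1` elements as the chain with `k` elements and an added bottom. -/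
def withBotFinOrderIso (k : ℕ) : Fin (k + 1) ≃o WithBot (Fin k) :=
  Fintype.orderIsoFinOfCardEq (WithBot (Fin k))
    (Fintype.card_option.trans (by simp))

-- Split according to whether `⊥` is sent to the least value; no other point can be.
theorem strictOrderPoly_withBot_succ (X : Type*) [LT X] [Finite X] (k : ℕ) :
    strictOrderPoly (WithBot X) (k + 1) =
      strictOrderPoly (WithBot X) k + strictOrderPoly X k := by
  classical
  let p (f : StrictMap (WithBot X) (WithBot (Fin k))) : Prop := f ⊥ = ⊥
  calc strictOrderPoly (WithBot X) (k + 1)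
      = Nat.card (StrictMap (WithBot X) (WithBot (Fin k))) :=
        Nat.card_congr (RelIso.relHomCongr (RelIso.refl _) (withBotFinOrderIso k).toRelIsoLT)
    _ = Nat.card {f // p f} + Nat.card {f // ¬ p f} := by
        rw [← Nat.card_sum, Nat.card_congr (Equiv.sumCompl p)]
    _ = strictOrderPoly X k + strictOrderPoly (WithBot X) k := by
        congr 1
        · exact Nat.card_congr
            ((StrictMap.mapBotEquiv X (Fin k)).trans (StrictMap.neBotEquiv X (Fin k)))
        · exact Nat.card_congr ((Equiv.subtypeEquivRight fun f => f.forall_ne_bot_iff.symm).trans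
            (StrictMap.neBotEquiv (WithBot X) (Fin k)))
    _ = strictOrderPoly (WithBot X) k + strictOrderPoly X k := add_comm _ _

/-- A strict map with range `S` is a strict surjection onto `S`. -/
def StrictMap.rangeEqEquiv {X Y : Type*} [LT X] [LT Y] (S : Set Y) :
    {f : StrictMap X Y // Set.range f = S} ≃ {f : StrictMap X S // Function.Surjective f} where
  toFun f := ⟨⟨fun x => ⟨f.1 x, f.2.subset (Set.mem_range_self x)⟩, f.1.map_rel⟩, by
    rintro ⟨y, hy⟩
    obtain ⟨x, rfl⟩ := f.2.superset hy
    exact ⟨x, rfl⟩⟩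
  invFun g := ⟨⟨fun x => g.1 x, g.1.map_rel⟩, by
    change Set.range (Subtype.val ∘ g.1) = S
    rw [g.2.range_comp, Subtype.range_coe]⟩
  left_inv _ := rfl
  right_inv _ := rfl

theorem card_strictMap_range_eq (X : Type*) [LT X] {k : ℕ} (S : Finset (Fin k)) :
    Nat.card {f : StrictMap X (Fin k) // Set.range f = S} = strictSurjCount X S.card := by
  let e : S ≃o Fin S.card := (S.orderIsoOfFin rfl).symm
  refine (Nat.card_congr (StrictMap.rangeEqEquiv (S : Set (Fin k)))).trans (Nat.card_congr
    ((RelIso.relHomCongr (RelIso.refl _) e.toRelIsoLT).subtypeEquiv fun f => ?_))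
  exact (EquivLike.comp_surjective (f : X → S) e).symm

theorem strictOrderPoly_eq_sum_choose (X : Type*) [LT X] [Finite X] (k : ℕ) :
    strictOrderPoly X k = ∑ j ∈ Finset.range (k + 1), k.choose j * strictSurjCount X j := by
  classical
  let range (f : StrictMap X (Fin k)) : Finset (Fin k) := (Set.range f).toFinset
  calc strictOrderPoly X k = ∑ S : Finset (Fin k), Nat.card {f // range f = S} := by
        rw [← Nat.card_sigma, Nat.card_congr (Equiv.sigmaFiberEquiv range), strictOrderPoly]
    _ = ∑ S : Finset (Fin k), strictSurjCount X S.card := by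
        refine Finset.sum_congr rfl fun S _ => ?_
        simp only [range, ← Finset.coe_inj, Set.coe_toFinset, card_strictMap_range_eq]
    _ = ∑ j ∈ Finset.range (k + 1), k.choose j * strictSurjCount X j := by
        simpa using Finset.sum_powerset_apply_card (strictSurjCount X)
          (x := (Finset.univ : Finset (Fin k)))

end StrictOrderPolynomial

theorem eq_of_sum_choose_nsmul_eq {M : Type*} [AddCancelCommMonoid M] {a b : ℕ → M}
    (h : ∀ k, ∑ j ∈ Finset.range (k + 1), k.choose j • a j =
      ∑ j ∈ Finset.range (k + 1), k.choose j • b j) : a = b := by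
  ext k
  induction k using Nat.strong_induction_on with
  | _ k ih =>
    have hlower : ∑ j ∈ Finset.range k, k.choose j • a j =
        ∑ j ∈ Finset.range k, k.choose j • b j :=
      Finset.sum_congr rfl fun j hj => by rw [ih j (Finset.mem_range.1 hj)]
    have hk := h k
    rw [Finset.sum_range_succ, Finset.sum_range_succ, hlower] at hk
    simpa using hk

namespace PTree

@[simp] theorem subtreeAt_nil (t : PTree) : subtreeAt [] t = some t := by
  cases t
  rfl

theorem subtreeAt_cons (cs : List PTree) (i : ℕ) (p : List ℕ) :
    subtreeAt (i :: p) (node cs) = cs[i]?.bind (subtreeAt p) := rfl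

@[simp] theorem isInternalAt_nil {t : PTree} : IsInternalAt t [] ↔ t ≠ leaf := by
  cases t
  simp [IsInternalAt]

theorem isInternalAt_cons {cs : List PTree} {i : ℕ} {p : List ℕ} :
    IsInternalAt (node cs) (i :: p) ↔ ∃ h : i < cs.length, IsInternalAt cs[i] p := by
  by_cases h : i < cs.length <;> simp [IsInternalAt, subtreeAt_cons, h]

theorem not_isInternalAt_leaf (p : List ℕ) : ¬ IsInternalAt leaf p := by
  cases p <;> simp [isInternalAt_cons]

theorem IsInternalAt.of_prefix {t : PTree} {v w : List ℕ} (hw : IsInternalAt t w)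
    (hvw : v <+: w) : IsInternalAt t v := by
  induction v generalizing t w with
  | nil => exact isInternalAt_nil.2 fun h => not_isInternalAt_leaf w (h ▸ hw)
  | cons i v ih =>
    obtain ⟨cs⟩ := t
    obtain ⟨w, rfl, htail⟩ := List.cons_prefix_iff.1 hvw
    obtain ⟨hi, hw⟩ := isInternalAt_cons.1 hw
    exact isInternalAt_cons.2 ⟨hi, ih hw htail⟩

@[simp] theorem isLeafAt_nil {t : PTree} : IsLeafAt t [] ↔ t = leaf := by
  simp [IsLeafAt]

theorem isLeafAt_cons {cs : List PTree} {i : ℕ} {p : List ℕ} :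
    IsLeafAt (node cs) (i :: p) ↔ ∃ h : i < cs.length, IsLeafAt cs[i] p := by
  by_cases h : i < cs.length <;> simp [IsLeafAt, subtreeAt_cons, h]

theorem isLeafAt_leaf {p : List ℕ} : IsLeafAt leaf p ↔ p = [] := by
  cases p <;> simp [isLeafAt_cons]

theorem add_cons_mem_verticesListAux {cs : List PTree} {i : ℕ} (h : i < cs.length) {p : List ℕ}
    (hp : p ∈ verticesList cs[i]) (m : ℕ) : (m + i) :: p ∈ verticesListAux m cs := by
  induction cs generalizing i m with
  | nil => simp at h
  | cons c cs ih =>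
    rw [verticesListAux, List.mem_append]
    cases i with
    | zero => exact .inl (List.mem_map_of_mem hp)
    | succ i =>
      rw [← Nat.add_assoc, Nat.add_right_comm]
      exact .inr (ih (Nat.lt_of_succ_lt_succ h) hp (m + 1))

theorem IsVertex.mem_verticesList {t : PTree} {p : List ℕ} (h : IsVertex t p) :
    p ∈ verticesList t := by
  induction p generalizing t with
  | nil =>
    cases t
    simp [verticesList]
  | cons i p ih =>
    obtain ⟨cs⟩ := t
    rw [IsVertex, subtreeAt_cons] at h
    by_cases hi : i < cs.length
    · rw [List.getElem?_eq_getElem hi] at h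
      rw [verticesList, ← Nat.zero_add i]
      exact .tail _ (add_cons_mem_verticesListAux hi (ih h) 0)
    · simp [hi] at h

theorem IsLeafAt.isVertex {t : PTree} {p : List ℕ} (h : IsLeafAt t p) : IsVertex t p :=
  Option.isSome_of_eq_some h

theorem IsInternalAt.isVertex {t : PTree} {p : List ℕ} (h : IsInternalAt t p) : IsVertex t p :=
  Option.isSome_of_eq_some h.choose_spec.1

theorem finite_isVertex (t : PTree) : {p | IsVertex t p}.Finite :=
  (verticesList t).finite_toSet.subset fun _ => IsVertex.mem_verticesList

theorem mem_internalFinset {t : PTree} {p : List ℕ} :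
    p ∈ internalFinset t ↔ IsInternalAt t p := by
  simpa [internalFinset] using fun h : IsInternalAt t p => h.isVertex.mem_verticesList

theorem mem_cutsFinset {t : PTree} {c : Finset (List ℕ)} :
    c ∈ cutsFinset t ↔ (∀ v ∈ c, IsInternalAt t v) ∧ ∀ v ∈ c, ∀ w ∈ c, v ≠ w → ¬ v <+: w := by
  simp [cutsFinset, Finset.subset_iff, mem_internalFinset]

@[simp] theorem subtree!_nil (t : PTree) : subtree! t [] = t := by
  simp [subtree!]

theorem subtree!_cons {cs : List PTree} {i : ℕ} (hi : i < cs.length) (p : List ℕ) :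
    subtree! (node cs) (i :: p) = subtree! cs[i] p := by
  simp [subtree!, subtreeAt_cons, hi]

theorem IsInternalAt.subtree!_ne_leaf {t : PTree} {p : List ℕ} (hp : IsInternalAt t p) :
    subtree! t p ≠ leaf := by
  obtain ⟨cs, h, hcs⟩ := hp
  simp [subtree!, h, hcs]

section CountingLeaves

/-- Nonempty paths, sorted by their first step. -/
def consPathEquiv {P : List ℕ → Prop} {n : ℕ} (hnil : ¬ P []) (hcons : ∀ i q, P (i :: q) → i < n) :
    {p // P p} ≃ Σ i : Fin n, {q // P (i :: q)} where
  toFun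
    | ⟨[], hp⟩ => absurd hp hnil
    | ⟨i :: q, hq⟩ => ⟨⟨i, hcons i q hq⟩, q, hq⟩
  invFun x := ⟨x.1 :: x.2.1, x.2.2⟩
  left_inv
    | ⟨[], hp⟩ => absurd hp hnil
    | ⟨_ :: _, _⟩ => rfl
  right_inv _ := rfl

theorem card_paths_eq_sum {P : List ℕ → Prop} (hP : {p | P p}.Finite) {n : ℕ} (hnil : ¬ P [])
    (hcons : ∀ i q, P (i :: q) → i < n) :
    Nat.card {p // P p} = ∑ i : Fin n, Nat.card {q // P (i :: q)} := by
  have (i : Fin n) : Finite {q // P (i :: q)} :=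
    (hP.preimage (List.cons_injective.injOn (s := List.cons i.1 ⁻¹' {p | P p}))).to_subtype
  rw [Nat.card_congr (consPathEquiv hnil hcons), Nat.card_sigma]

@[simp] theorem numLeaves_leaf : numLeaves leaf = 1 := by
  simp [numLeaves, isLeafAt_leaf]

theorem numLeaves_node {cs : List PTree} (hcs : cs ≠ []) :
    numLeaves (node cs) = ∑ i : Fin cs.length, numLeaves cs[i.1] := by
  unfold numLeaves
  rw [card_paths_eq_sum (P := IsLeafAt (node cs))
    ((finite_isVertex _).subset fun _ => IsLeafAt.isVertex) (by simpa)
    fun i q h => (isLeafAt_cons.1 h).1]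
  simp [isLeafAt_cons]

/-- The number of leaves of `node cs` lying in the children to the left of the `i`-th one. -/
noncomputable def leavesLeft (cs : List PTree) (i : Fin cs.length) : ℕ :=
  ∑ j ∈ Finset.Iio i, numLeaves cs[j.1]

@[simp] theorem leavesBefore_nil (t : PTree) : leavesBefore t [] = 0 := by
  simp [leavesBefore]

theorem leafBefore_cons_cons {cs : List PTree} {i j : ℕ} {p q : List ℕ} :
    (IsLeafAt (node cs) (j :: q) ∧ List.Lex (· < ·) (j :: q) (i :: p) ∧ ¬ i :: p <+: j :: q) ↔
      IsLeafAt (node cs) (j :: q) ∧ (j < i ∨ j = i ∧ List.Lex (· < ·) q p ∧ ¬ p <+: q) := by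
  rw [List.cons_lex_cons_iff, List.cons_prefix_cons]
  grind

theorem leavesBefore_cons {cs : List PTree} (i : Fin cs.length) (p : List ℕ) :
    leavesBefore (node cs) (i :: p) = leavesLeft cs i + leavesBefore cs[i.1] p := by
  have hcard (j : Fin cs.length) : Nat.card {q // IsLeafAt (node cs) (j :: q) ∧
      List.Lex (· < ·) (j.1 :: q) (i :: p) ∧ ¬ i.1 :: p <+: j :: q} =
      (if j < i then numLeaves cs[j.1] else 0) + if j = i then leavesBefore cs[i.1] p else 0 := by
    simp_rw [leafBefore_cons_cons, isLeafAt_cons, exists_prop_of_true j.2]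
    rcases lt_trichotomy j i with hji | rfl | hij
    · simp [hji, hji.ne, numLeaves]
    · simp [leavesBefore]
    · simp [hij.not_gt, hij.ne', Fin.val_inj]
  have hcs : cs ≠ [] := List.ne_nil_of_length_pos i.pos
  rw [leavesBefore, card_paths_eq_sum
    ((finite_isVertex _).subset fun _ h => IsLeafAt.isVertex h.1) (n := cs.length)
    (by simp [hcs]) fun j q h => (isLeafAt_cons.1 h.1).1]
  simp_rw [hcard, Finset.sum_add_distrib, leavesLeft]
  simp [← Finset.sum_filter, Finset.filter_gt_eq_Iio]

theorem leavesLeft_add_le {cs : List PTree} (i : Fin cs.length) :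
    leavesLeft cs i + numLeaves cs[i.1] ≤ numLeaves (node cs) := by
  rw [numLeaves_node (List.ne_nil_of_length_pos i.pos)]
  rw [leavesLeft, add_comm, ← Finset.sum_insert (f := fun j : Fin cs.length => numLeaves cs[j.1])
    Finset.notMem_Iio_self]
  exact Finset.sum_le_sum_of_subset (Finset.subset_univ _)

theorem IsInternalAt.leavesBefore_add_le {t : PTree} {p : List ℕ} (h : IsInternalAt t p) :
    leavesBefore t p + numLeaves (subtree! t p) ≤ numLeaves t := by
  induction p generalizing t with
  | nil => simp
  | cons i p ih =>
    obtain ⟨cs⟩ := t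
    obtain ⟨hi, h⟩ := isInternalAt_cons.1 h
    have hchild := leavesLeft_add_le ⟨i, hi⟩
    have hsub := ih h
    rw [leavesBefore_cons ⟨i, hi⟩, subtree!_cons hi]
    dsimp only at hchild ⊢
    omega

end CountingLeaves

theorem IsSchroder.numLeaves_pos {t : PTree} (h : IsSchroder t) : 0 < numLeaves t := by
  induction h with
  | leaf => simp
  | node cs h2 h ih =>
    rw [numLeaves_node (List.ne_nil_of_length_pos (by omega))]
    exact Finset.sum_pos (fun i _ => ih _ (List.getElem_mem _)) ⟨⟨0, by omega⟩, Finset.mem_univ _⟩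

theorem IsSchroder.two_le_length {cs : List PTree} (h : IsSchroder (PTree.node cs))
    (hcs : cs ≠ []) : 2 ≤ cs.length := by
  cases h with
  | leaf => exact absurd rfl hcs
  | node _ h _ => exact h

theorem IsSchroder.child {cs : List PTree} (h : IsSchroder (PTree.node cs)) {i : ℕ}
    (hi : i < cs.length) : IsSchroder cs[i] := by
  cases h with
  | leaf => simp at hi
  | node _ _ h => exact h _ (List.getElem_mem _)

theorem IsSchroder.subtree! {t : PTree} (h : IsSchroder t) {p : List ℕ} (hp : IsInternalAt t p) :
    IsSchroder (subtree! t p) := by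
  induction p generalizing t with
  | nil => simpa
  | cons i p ih =>
    obtain ⟨cs⟩ := t
    obtain ⟨hi, hp⟩ := isInternalAt_cons.1 hp
    rw [subtree!_cons hi]
    exact ih (h.child hi) hp

section Sectors

theorem sectorIn_cons {cs : List PTree} (i : Fin cs.length) (p : List ℕ) (s : ℕ) :
    SectorIn (node cs) (i :: p) s ↔
      leavesLeft cs i ≤ s ∧ SectorIn cs[i.1] p (s - leavesLeft cs i) := by
  rw [SectorIn, SectorIn, leavesBefore_cons, subtree!_cons i.2]
  omega

theorem sectorIn_nil {t : PTree} {s : ℕ} : SectorIn t [] s ↔ s < numSectors t := by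
  simp only [SectorIn, leavesBefore_nil, subtree!_nil, numSectors]
  omega

theorem SectorIn.of_prefix {t : PTree} {v w : List ℕ} {s : ℕ} (hs : SectorIn t w s)
    (hw : IsInternalAt t w) (hvw : v <+: w) : SectorIn t v s := by
  induction v generalizing t w s with
  | nil =>
    have hle := hw.leavesBefore_add_le
    simp only [SectorIn, leavesBefore_nil, subtree!_nil] at hs ⊢
    omega
  | cons i v ih =>
    obtain ⟨cs⟩ := t
    obtain ⟨w, rfl, htail⟩ := List.cons_prefix_iff.1 hvw
    obtain ⟨hi, hw⟩ := isInternalAt_cons.1 hw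
    obtain ⟨hle, hs⟩ := (sectorIn_cons ⟨i, hi⟩ w s).1 hs
    exact (sectorIn_cons ⟨i, hi⟩ v s).2 ⟨hle, ih hs hw htail⟩

theorem ownsSector_cons {cs : List PTree} (i : Fin cs.length) (p : List ℕ) (s : ℕ) :
    OwnsSector (node cs) (i :: p) s ↔
      leavesLeft cs i ≤ s ∧ OwnsSector cs[i.1] p (s - leavesLeft cs i) := by
  have hstrict : (∀ w, IsInternalAt (node cs) w → i.1 :: p <+: w → w ≠ i.1 :: p →
      ¬ SectorIn (node cs) w s) ↔ ∀ w, IsInternalAt cs[i.1] w → p <+: w → w ≠ p →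
      ¬ SectorIn (node cs) (i :: w) s := by
    constructor
    · intro h w hw hpw hne
      exact h (i :: w) (isInternalAt_cons.2 ⟨i.2, hw⟩) (by simpa) (by simpa)
    · intro h w hw hpw hne
      obtain ⟨w, rfl, htail⟩ := List.cons_prefix_iff.1 hpw
      exact h w (isInternalAt_cons.1 hw).2 htail (by simpa using hne)
  rw [OwnsSector, OwnsSector, hstrict]
  simp only [sectorIn_cons, isInternalAt_cons, i.2, exists_true_left]
  grind

theorem removedIdx_iff {t : PTree} {c : Finset (List ℕ)} {s : ℕ} :
    RemovedIdx t c s ↔ ∃ v ∈ c, SectorIn t v s := by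
  simp only [RemovedIdx, SectorIn, numSectors]
  grind

open Classical in
/-- The cut at all the internal children of the root. Its trunk is the corolla at the root. -/
noncomputable def rootCut (t : PTree) : Finset (List ℕ) :=
  (internalFinset t).filter fun v => v.length = 1

theorem mem_rootCut {t : PTree} {v : List ℕ} :
    v ∈ rootCut t ↔ IsInternalAt t v ∧ v.length = 1 := by
  simp [rootCut, mem_internalFinset]

theorem ownsSector_nil_iff {t : PTree} (ht : t ≠ leaf) {s : ℕ} :
    OwnsSector t [] s ↔ s < numSectors t ∧ ¬ RemovedIdx t (rootCut t) s := by
  rw [OwnsSector, isInternalAt_nil, sectorIn_nil, removedIdx_iff]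
  refine (and_iff_right ht).trans (and_congr_right fun _ => ⟨?_, ?_⟩)
  · rintro h ⟨v, hv, hs⟩
    obtain ⟨hv, hlen⟩ := mem_rootCut.1 hv
    exact h v hv List.nil_prefix (List.ne_nil_of_length_pos (by omega)) hs
  · intro h w hw _ hne hs
    have hlen : 0 < w.length := List.length_pos_iff.2 hne
    exact h ⟨w.take 1, mem_rootCut.2 ⟨hw.of_prefix (w.take_prefix 1), by simp; omega⟩,
      hs.of_prefix hw (w.take_prefix 1)⟩

end Sectors

section Skeleton

/-- The poset of internal vertices of `t`, ordered by ancestry: the skeleton `sk(t)`. It is not an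
abbreviation, since lists of integers also carry the lexicographic order. -/
def Skeleton (t : PTree) : Type := {p // IsInternalAt t p}

instance (t : PTree) : PartialOrder (Skeleton t) where
  le v w := v.1 <+: w.1
  le_refl v := List.prefix_rfl
  le_trans _ _ _ := List.IsPrefix.trans
  le_antisymm _ _ h h' := Subtype.ext (h.eq_of_length_le h'.length_le)

noncomputable instance (t : PTree) : Fintype (Skeleton t) :=
  ((finite_isVertex t).subset fun _ => IsInternalAt.isVertex).fintype

instance : IsEmpty (Skeleton leaf) := ⟨fun v => not_isInternalAt_leaf _ v.2⟩

theorem omegaSkK_eq_strictSurjCount (t : PTree) (k : ℕ) :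
    omegaSkK t k = strictSurjCount (Skeleton t) k :=
  Nat.card_congr
    { toFun f := ⟨⟨f.1, fun h => f.2.2 _ _ h.le h.ne⟩, f.2.1⟩
      invFun f := ⟨f.1, f.2, fun _ _ h hne => f.1.map_rel (lt_of_le_of_ne h hne)⟩
      left_inv _ := rfl
      right_inv _ := rfl }

/-- The skeleton of `node cs` is the root below the disjoint union of the skeletons of `cs`. -/
def skeletonNodeOrderIso {cs : List PTree} (hcs : cs ≠ []) :
    Skeleton (node cs) ≃o WithBot (Σ i : Fin cs.length, Skeleton cs[i.1]) where
  toFun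
    | ⟨[], _⟩ => ⊥
    | ⟨i :: p, hp⟩ => WithBot.some ⟨⟨i, (isInternalAt_cons.1 hp).1⟩, p, (isInternalAt_cons.1 hp).2⟩
  invFun
    | ⊥ => ⟨[], isInternalAt_nil.2 (by simpa)⟩
    | WithBot.some x => ⟨x.1 :: x.2.1, isInternalAt_cons.2 ⟨x.1.2, x.2.2⟩⟩
  left_inv
    | ⟨[], _⟩ => rfl
    | ⟨_ :: _, _⟩ => rfl
  right_inv
    | ⊥ => rfl
    | WithBot.some _ => rfl
  map_rel_iff' := by
    rintro ⟨_ | ⟨i, p⟩, hp⟩ ⟨_ | ⟨j, q⟩, hq⟩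
    · exact iff_of_true le_rfl le_rfl
    · exact iff_of_true bot_le List.nil_prefix
    · exact iff_of_false (WithBot.not_coe_le_bot _) (by simp [LE.le])
    · refine WithBot.coe_le_coe.trans (Iff.trans ?_ List.cons_prefix_cons.symm)
      constructor
      · rintro ⟨⟩
        exact ⟨rfl, by assumption⟩
      · rintro ⟨rfl, h⟩
        exact Sigma.mk_le_mk_iff.2 h

theorem strictOrderPoly_skeleton_node_zero {cs : List PTree} (hcs : cs ≠ []) :
    strictOrderPoly (Skeleton (node cs)) 0 = 0 := by
  rw [strictOrderPoly_congr (skeletonNodeOrderIso hcs), strictOrderPoly_zero]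

theorem strictOrderPoly_skeleton_node_succ {cs : List PTree} (hcs : cs ≠ []) (k : ℕ) :
    strictOrderPoly (Skeleton (node cs)) (k + 1) = strictOrderPoly (Skeleton (node cs)) k +
      ∏ i : Fin cs.length, strictOrderPoly (Skeleton cs[i.1]) k := by
  rw [strictOrderPoly_congr (skeletonNodeOrderIso hcs),
    strictOrderPoly_congr (skeletonNodeOrderIso hcs), strictOrderPoly_withBot_succ,
    strictOrderPoly_sigma]

end Skeleton

section Words

open Classical in
/-- The letters of `w` in the positions satisfying `P`. -/
noncomputable def subword {A : Type*} [Zero A] (w : List A) (P : ℕ → Prop) : List A :=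
  ((List.range w.length).filter fun s => P s).map fun s => w.getD s 0

variable {A : Type*}

@[simp] theorem subword_nil [Zero A] (P : ℕ → Prop) : subword ([] : List A) P = [] := rfl

open Classical in
theorem subword_cons [Zero A] (a : A) (w : List A) (P : ℕ → Prop) :
    subword (a :: w) P = (if P 0 then [a] else []) ++ subword w fun s => P (s + 1) := by
  simp only [subword, List.length_cons, List.range_succ_eq_map, List.filter_cons, List.filter_map,
    decide_eq_true_eq]
  split_ifs <;> simp [Function.comp_def]

theorem subword_congr [Zero A] {w : List A} {P Q : ℕ → Prop} (h : ∀ s < w.length, (P s ↔ Q s)) :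
    subword w P = subword w Q := by
  unfold subword
  congr 1
  exact List.filter_congr fun s hs => by simp [h s (List.mem_range.1 hs)]

theorem subword_eq_nil [Zero A] {w : List A} {P : ℕ → Prop} (h : ∀ s, ¬ P s) :
    subword w P = [] := by
  simp [subword, h]

theorem subword_drop [Zero A] {P : ℕ → Prop} {m : ℕ} (h : ∀ s, P s → m ≤ s) (w : List A) :
    subword (w.drop m) (fun s => P (m + s)) = subword w P := by
  induction m generalizing w P with
  | zero => simp
  | succ m ih =>
    cases w with
    | nil => simp
    | cons a w =>
      have h0 : ¬ P 0 := fun h0 => absurd (h 0 h0) (by omega)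
      simp only [List.drop_succ_cons, Nat.add_right_comm m 1]
      rw [ih (P := fun s => P (s + 1)) fun s hs => Nat.le_of_succ_le_succ (h _ hs), subword_cons,
        if_neg h0, List.nil_append]

theorem subword_take [Zero A] {P : ℕ → Prop} {m : ℕ} (h : ∀ s, P s → s < m) (w : List A) :
    subword (w.take m) P = subword w P := by
  induction m generalizing w P with
  | zero => rw [List.take_zero, subword_nil, subword_eq_nil fun s hs => Nat.not_lt_zero s (h s hs)]
  | succ m ih =>
    cases w with
    | nil => simp
    | cons a w =>
      rw [List.take_succ_cons, subword_cons, subword_cons,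
        ih fun s hs => Nat.lt_of_succ_lt_succ (h _ hs)]

/-- The subword of `w` decorating the `i`-th child of the root of `node cs`. -/
noncomputable def childWord (cs : List PTree) (w : List A) (i : Fin cs.length) : List A :=
  (w.drop (leavesLeft cs i)).take (numSectors cs[i.1])

theorem OwnsSector.lt_numSectors {t : PTree} {v : List ℕ} {s : ℕ} (h : OwnsSector t v s) :
    s < numSectors t :=
  sectorIn_nil.1 (h.2.1.of_prefix h.1 List.nil_prefix)

theorem subword_childWord_ownsSector [Zero A] {cs : List PTree} (w : List A) (i : Fin cs.length)
    (p : List ℕ) : subword (childWord cs w i) (OwnsSector cs[i.1] p) =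
      subword w (OwnsSector (node cs) (i :: p)) := by
  rw [childWord, subword_take fun s => OwnsSector.lt_numSectors,
    ← subword_drop fun s hs => ((ownsSector_cons i p s).1 hs).1]
  simp [ownsSector_cons]

theorem subword_ownsSector_nil [Zero A] {t : PTree} (ht : t ≠ leaf) {w : List A}
    (hw : w.length = numSectors t) :
    subword w (OwnsSector t []) = trunkWord t (rootCut t) w := by
  rw [subword_congr fun s hs => (ownsSector_nil_iff ht).trans (and_iff_right (hw ▸ hs))]
  simp only [subword, trunkWord]
  congr!

theorem phiPi_eq_prod [Ring A] (φ : A → ℂ) (t : PTree) (w : List A) :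
    phiPi φ t w = ∏ v : Skeleton t, φ (subword w (OwnsSector t v.1)).prod := by
  rw [← finprod_eq_prod_of_fintype]
  exact (finprod_set_coe_eq_finprod_mem {v | IsInternalAt t v}
    (f := fun v => φ (subword w (OwnsSector t v)).prod)).symm

theorem phiPi_leaf [Ring A] (φ : A → ℂ) (w : List A) : phiPi φ leaf w = 1 := by
  rw [phiPi_eq_prod, Fintype.prod_empty]

theorem phiPi_node [Ring A] (φ : A → ℂ) {cs : List PTree} (hcs : cs ≠ []) (w : List A) :
    phiPi φ (node cs) w = φ (subword w (OwnsSector (node cs) [])).prod *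
      ∏ i : Fin cs.length, phiPi φ cs[i.1] (childWord cs w i) := by
  simp_rw [phiPi_eq_prod, subword_childWord_ownsSector]
  rw [← Equiv.prod_comp (skeletonNodeOrderIso hcs).symm.toEquiv]
  refine (Fintype.prod_option _).trans ?_
  rw [Fintype.prod_sigma]
  rfl

end Words

section Trunks

theorem isCorolla_node {cs : List PTree} :
    IsCorolla (node cs) ↔ 2 ≤ cs.length ∧ ∀ (i : ℕ) (hi : i < cs.length), cs[i] = leaf := by
  simp only [IsCorolla, corolla, node.injEq, List.eq_replicate_iff,
    List.forall_mem_iff_forall_getElem]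
  grind

theorem replaceLeaf_eq_leaf {p : List ℕ} {t : PTree} :
    replaceLeaf p t = leaf ↔ t = leaf ∨ p = [] := by
  obtain ⟨cs⟩ := t
  cases p <;> simp [replaceLeaf]

theorem foldl_replaceLeaf_ne_leaf {t : PTree} (ht : t ≠ leaf) {L : List (List ℕ)}
    (hL : [] ∉ L) : L.foldl (fun s v => replaceLeaf v s) t ≠ leaf := by
  induction L generalizing t with
  | nil => exact ht
  | cons v L ih =>
    obtain ⟨hv, hnil⟩ := List.ne_and_not_mem_of_not_mem_cons hL
    exact ih (by simp [replaceLeaf_eq_leaf, ht, hv.symm]) hnil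

theorem isCorolla_foldl_replaceLeaf {cs : List PTree} {L : List (List ℕ)} (hL : [] ∉ L) :
    IsCorolla (L.foldl (fun s v => replaceLeaf v s) (node cs)) ↔
      2 ≤ cs.length ∧ ∀ (i : ℕ) (hi : i < cs.length), cs[i] = leaf ∨ [i] ∈ L := by
  induction L generalizing cs with
  | nil => simp [isCorolla_node]
  | cons v L ih =>
    obtain ⟨hv, hnil⟩ := List.ne_and_not_mem_of_not_mem_cons hL
    obtain ⟨j, p, rfl⟩ := List.exists_cons_of_ne_nil hv.symm
    rw [List.foldl_cons, replaceLeaf, ih hnil]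
    simp only [List.length_set]
    refine and_congr_right fun _ => forall₂_congr fun i hi => ?_
    rw [List.getElem_set, List.mem_cons]
    by_cases hij : j = i
    · subst hij
      simp [replaceLeaf_eq_leaf, hi, or_assoc]
    · simp [hij, Ne.symm hij]

theorem sortCut_perm (t : PTree) (c : Finset (List ℕ)) : (sortCut t c).Perm c.toList :=
  List.mergeSort_perm _ _

theorem mem_sortCut {t : PTree} {c : Finset (List ℕ)} {v : List ℕ} : v ∈ sortCut t c ↔ v ∈ c := by
  rw [(sortCut_perm t c).mem_iff, Finset.mem_toList]

theorem sortCut_singleton (t : PTree) (v : List ℕ) : sortCut t {v} = [v] := by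
  simp [sortCut]

theorem trunkTree_singleton_nil (t : PTree) : trunkTree t {[]} = leaf := by
  simp [trunkTree, sortCut_singleton, replaceLeaf]

theorem trunkTree_ne_leaf {t : PTree} (ht : t ≠ leaf) {c : Finset (List ℕ)} (hc : [] ∉ c) :
    trunkTree t c ≠ leaf :=
  foldl_replaceLeaf_ne_leaf ht (by rwa [mem_sortCut])

theorem rootCut_node_subset_iff {cs : List PTree} {c : Finset (List ℕ)} :
    rootCut (node cs) ⊆ c ↔ ∀ (i : ℕ) (hi : i < cs.length), cs[i] = leaf ∨ [i] ∈ c := by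
  simp only [Finset.subset_iff, mem_rootCut, List.length_eq_one_iff]
  refine ⟨fun h i hi => ?_, ?_⟩
  · rw [or_iff_not_imp_left]
    exact fun hne => h ⟨isInternalAt_cons.2 ⟨hi, isInternalAt_nil.2 hne⟩, i, rfl⟩
  · rintro h _ ⟨hv, i, rfl⟩
    obtain ⟨hi, hne⟩ := isInternalAt_cons.1 hv
    exact (h i hi).resolve_left (isInternalAt_nil.1 hne)

theorem isCorolla_trunkTree_iff {t : PTree} (ht : IsSchroder t) (hne : t ≠ leaf)
    {c : Finset (List ℕ)} (hc : [] ∉ c) : IsCorolla (trunkTree t c) ↔ rootCut t ⊆ c := by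
  obtain ⟨cs⟩ := t
  rw [trunkTree, isCorolla_foldl_replaceLeaf (by rwa [mem_sortCut]), rootCut_node_subset_iff,
    and_iff_right (ht.two_le_length (by simpa using hne))]
  simp only [mem_sortCut]

end Trunks

section Cuts

variable {t : PTree} {c : Finset (List ℕ)}

theorem singleton_nil_mem_cutsFinset (ht : t ≠ leaf) : {[]} ∈ cutsFinset t := by
  simpa [mem_cutsFinset]

theorem rootCut_mem_cutsFinset (t : PTree) : rootCut t ∈ cutsFinset t := by
  simp only [mem_cutsFinset, mem_rootCut]
  exact ⟨fun v hv => hv.1, fun v hv w hw hne hvw =>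
    hne (hvw.eq_of_length (hv.2.trans hw.2.symm))⟩

theorem nil_notMem_rootCut (t : PTree) : [] ∉ rootCut t := by
  simp [mem_rootCut]

theorem nil_notMem_of_mem_cutsFinset (hc : c ∈ cutsFinset t) (hne : c ≠ {[]}) : [] ∉ c := by
  intro hnil
  refine hne (Finset.eq_singleton_iff_unique_mem.2 ⟨hnil, fun v hv => ?_⟩)
  by_contra hv0
  exact (mem_cutsFinset.1 hc).2 [] hnil v hv (Ne.symm hv0) List.nil_prefix

theorem eq_rootCut_of_subset (hc : c ∈ cutsFinset t) (hnil : [] ∉ c) (h : rootCut t ⊆ c) :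
    c = rootCut t := by
  obtain ⟨hint, hanti⟩ := mem_cutsFinset.1 hc
  refine (Finset.Subset.antisymm h fun v hv => ?_).symm
  have hlen : 0 < v.length := List.length_pos_iff.2 (ne_of_mem_of_not_mem hv hnil)
  have hmem : v.take 1 ∈ rootCut t :=
    mem_rootCut.2 ⟨(hint v hv).of_prefix (v.take_prefix 1), by simp; omega⟩
  by_cases heq : v.take 1 = v
  · rwa [heq] at hmem
  · exact absurd (v.take_prefix 1) (hanti _ (h hmem) v hv heq)

end Cuts

variable {A : Type*}

section Convolution

theorem convD_nil [Zero A] (f g : DForest A → ℂ) : convD f g [] = f [] * g [] := by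
  simp [convD, forestSplits]

theorem convD_cons [Zero A] (f g : DForest A → ℂ) (d : PTree × List A) (F : DForest A) :
    convD f g (d :: F) = ∑ c ∈ cutsFinset d.1,
      convD (fun G => f (trunkPart d c ++ G)) (fun G => g (prunePart d c ++ G)) F := by
  simp only [convD, forestSplits, List.map_flatMap, List.map_map]
  rw [List.flatMap, List.sum_flatten, List.map_map, ← Finset.sum_map_toList]
  rfl

/-- The convolution product as a bilinear map. -/
noncomputable def convDBilin (A : Type*) [Zero A] :
    (DForest A → ℂ) →ₗ[ℂ] (DForest A → ℂ) →ₗ[ℂ] DForest A → ℂ :=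
  LinearMap.mk₂ ℂ convD
    (fun f f' g => by ext F; simp [convD, add_mul, List.sum_map_add])
    (fun a f g => by ext F; simp [convD, mul_assoc, List.sum_map_mul_left])
    (fun f g g' => by ext F; simp [convD, mul_add, List.sum_map_add])
    (fun a f g => by ext F; simp [convD, mul_left_comm _ a, List.sum_map_mul_left])

theorem convDBilin_apply [Zero A] (f g : DForest A → ℂ) : convDBilin A f g = convD f g := rfl

/-- Unital multiplicative functionals on decorated forests: the characters of `H_S(A)`. -/
structure IsMultiplicative (f : DForest A → ℂ) : Prop where
  map_nil : f [] = 1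
  map_append : ∀ F G, f (F ++ G) = f F * f G

theorem isMultiplicative_epsD : IsMultiplicative (epsD (A := A)) :=
  ⟨by simp [epsD], fun F G => by by_cases hF : F = [] <;> simp [epsD, hF]⟩

theorem isMultiplicative_charD [Ring A] (φ : A → ℂ) : IsMultiplicative (charD φ) :=
  ⟨by simp [charD], fun F G => by simp [charD]⟩

theorem IsMultiplicative.convD_cons [Zero A] {f g : DForest A → ℂ} (hf : IsMultiplicative f)
    (hg : IsMultiplicative g) (d : PTree × List A) (F : DForest A) :
    convD f g (d :: F) =
      (∑ c ∈ cutsFinset d.1, f (trunkPart d c) * g (prunePart d c)) * convD f g F := by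
  rw [PTree.convD_cons, Finset.sum_mul]
  refine Finset.sum_congr rfl fun c _ => ?_
  have hleft : (fun G => f (trunkPart d c ++ G)) = f (trunkPart d c) • f :=
    funext (hf.map_append _)
  have hright : (fun G => g (prunePart d c ++ G)) = g (prunePart d c) • g :=
    funext (hg.map_append _)
  rw [hleft, hright, ← convDBilin_apply, LinearMap.map_smul₂, map_smul, convDBilin_apply]
  simp [mul_assoc]

theorem IsMultiplicative.convD [Zero A] {f g : DForest A → ℂ} (hf : IsMultiplicative f)
    (hg : IsMultiplicative g) : IsMultiplicative (convD f g) := by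
  have hnil : PTree.convD f g [] = 1 := by rw [convD_nil, hf.map_nil, hg.map_nil, one_mul]
  refine ⟨hnil, fun F G => ?_⟩
  induction F with
  | nil => rw [List.nil_append, hnil, one_mul]
  | cons d F ih => rw [List.cons_append, hf.convD_cons hg, hf.convD_cons hg, ih, mul_assoc]

theorem IsMultiplicative.convPowD [Zero A] {f : DForest A → ℂ} (hf : IsMultiplicative f) (k : ℕ) :
    IsMultiplicative (convPowD f k) := by
  induction k with
  | zero => exact isMultiplicative_epsD
  | succ k ih => exact hf.convD ih

theorem IsMultiplicative.convD_singleton [Zero A] {f g : DForest A → ℂ} (hf : IsMultiplicative f)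
    (hg : IsMultiplicative g) (d : PTree × List A) :
    PTree.convD f g [d] = ∑ c ∈ cutsFinset d.1, f (trunkPart d c) * g (prunePart d c) := by
  rw [hf.convD_cons hg, (hf.convD hg).map_nil, mul_one]

theorem IsMultiplicative.map_prunePart {g : DForest A → ℂ} (hg : IsMultiplicative g)
    (d : PTree × List A) (c : Finset (List ℕ)) :
    g (prunePart d c) = ∏ v ∈ c, g [(subtree! d.1 v,
      (d.2.drop (leavesBefore d.1 v)).take (numSectors (subtree! d.1 v)))] := by
  have hprod (F : DForest A) : g F = (F.map fun e => g [e]).prod := by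
    induction F with
    | nil => exact hg.map_nil
    | cons e F ih => rw [← List.singleton_append, hg.map_append, ih]; simp
  rw [hprod, prunePart, List.map_map, ((sortCut_perm _ _).map _).prod_eq, Finset.prod_map_toList]
  rfl

end Convolution

section GoodForests

theorem goodForest_singleton {d : PTree × List A} : GoodForest [d] ↔ GoodTree d := by
  simp [GoodForest]

theorem goodForest_cons {d : PTree × List A} {F : DForest A} :
    GoodForest (d :: F) ↔ GoodTree d ∧ GoodForest F := by
  simp [GoodForest]

theorem goodForest_append {F G : DForest A} :
    GoodForest (F ++ G) ↔ GoodForest F ∧ GoodForest G := by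
  simp [GoodForest, or_imp, forall_and]

theorem goodTree_of_mem_ST {n : ℕ} (hn : 1 ≤ n) {t : PTree} (ht : t ∈ ST n) {w : List A}
    (hw : w.length = n) : GoodTree (t, w) := by
  obtain ⟨hS, hleaves⟩ := ht
  refine ⟨hS, ?_, by simp only [numSectors]; omega⟩
  rintro rfl
  rw [numLeaves_leaf] at hleaves
  omega

theorem GoodTree.subtree {d : PTree × List A} (hd : GoodTree d) {v : List ℕ}
    (hv : IsInternalAt d.1 v) : GoodTree (subtree! d.1 v,
      (d.2.drop (leavesBefore d.1 v)).take (numSectors (subtree! d.1 v))) := by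
  refine ⟨hd.1.subtree! hv, hv.subtree!_ne_leaf, ?_⟩
  have hle := hv.leavesBefore_add_le
  have hpos := (hd.1.subtree! hv).numLeaves_pos
  have hlen := hd.2.2
  simp only [numSectors, List.length_take, List.length_drop] at hlen ⊢
  omega

theorem GoodTree.prunePart {d : PTree × List A} (hd : GoodTree d) {c : Finset (List ℕ)}
    (hc : c ∈ cutsFinset d.1) : GoodForest (prunePart d c) := by
  intro e he
  obtain ⟨v, hv, rfl⟩ := List.mem_map.1 he
  exact hd.subtree ((mem_cutsFinset.1 hc).1 v (mem_sortCut.1 hv))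

theorem GoodForest.of_mem_forestSplits [Zero A] {F : DForest A} (hF : GoodForest F)
    {s : DForest A × DForest A} (hs : s ∈ forestSplits F) : GoodForest s.2 := by
  induction F generalizing s with
  | nil =>
    rw [forestSplits, List.mem_singleton] at hs
    rwa [hs]
  | cons d F ih =>
    obtain ⟨hd, hF⟩ := goodForest_cons.1 hF
    simp only [forestSplits, List.mem_flatMap, Finset.mem_toList, List.mem_map] at hs
    obtain ⟨c, hc, s, hs, rfl⟩ := hs
    exact goodForest_append.2 ⟨hd.prunePart hc, ih hF hs⟩

theorem convD_congr_right [Zero A] (f : DForest A → ℂ) {g h : DForest A → ℂ}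
    (hgh : ∀ G, GoodForest G → g G = h G) {F : DForest A} (hF : GoodForest F) :
    convD f g F = convD f h F := by
  unfold convD
  congr 1
  exact List.map_congr_left fun s hs => by rw [hgh _ (hF.of_mem_forestSplits hs)]

end GoodForests

section Counit

theorem GoodTree.prunePart_singleton_nil {d : PTree × List A} (hd : GoodTree d) :
    PTree.prunePart d {[]} = [d] := by
  simp [PTree.prunePart, sortCut_singleton, ← hd.2.2]

theorem trunkPart_singleton_nil [Zero A] (d : PTree × List A) : trunkPart d {[]} = [] := by
  simp [trunkPart, trunkTree_singleton_nil]

theorem trunkPart_of_nil_notMem [Zero A] {d : PTree × List A} (hd : d.1 ≠ leaf)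
    {c : Finset (List ℕ)} (hc : [] ∉ c) :
    trunkPart d c = [(trunkTree d.1 c, trunkWord d.1 c d.2)] :=
  if_neg (trunkTree_ne_leaf hd hc)

theorem convD_epsD [Zero A] (g : DForest A → ℂ) {F : DForest A} (hF : GoodForest F) :
    convD epsD g F = g F := by
  induction F generalizing g with
  | nil => simp [convD_nil, epsD]
  | cons d F ih =>
    obtain ⟨hd, hF⟩ := goodForest_cons.1 hF
    rw [convD_cons, Finset.sum_eq_single_of_mem {[]} (singleton_nil_mem_cutsFinset hd.2.1)]
    · simp only [trunkPart_singleton_nil, hd.prunePart_singleton_nil, List.nil_append]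
      exact ih _ hF
    · intro c hc hne
      rw [trunkPart_of_nil_notMem hd.2.1 (nil_notMem_of_mem_cutsFinset hc hne)]
      simp [convD, epsD]

theorem convPowD_add_epsD [Zero A] (f : DForest A → ℂ) (k : ℕ) {F : DForest A}
    (hF : GoodForest F) : convPowD (f + epsD) k F =
      (∑ j ∈ Finset.range (k + 1), k.choose j • convPowD f j) F := by
  induction k generalizing F with
  | zero => simp [convPowD]
  | succ k ih =>
    let S := ∑ j ∈ Finset.range (k + 1), k.choose j • convPowD f j
    have hS : convD f S = ∑ j ∈ Finset.range (k + 1), k.choose j • convPowD f (j + 1) := by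
      simp only [S, ← convDBilin_apply, map_sum, map_nsmul]
      rfl
    calc convPowD (f + epsD) (k + 1) F
        = convD (f + epsD) S F := convD_congr_right _ (fun _ => ih) hF
      _ = convD f S F + convD epsD S F := by
          simp only [← convDBilin_apply, LinearMap.map_add₂, Pi.add_apply]
      _ = (S + convD f S) F := by rw [convD_epsD _ hF, add_comm, Pi.add_apply]
      _ = _ := by rw [hS, Finset.sum_choose_succ_nsmul fun j _ => convPowD f j]

end Counit

section Character

theorem charD_trunkPart_rootCut [Ring A] (φ : A → ℂ) {d : PTree × List A} (hd : GoodTree d) :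
    charD φ (trunkPart d (rootCut d.1)) = φ (subword d.2 (OwnsSector d.1 [])).prod := by
  have hcorolla : IsCorolla (trunkTree d.1 (rootCut d.1)) :=
    (isCorolla_trunkTree_iff hd.1 hd.2.1 (nil_notMem_rootCut _)).2 subset_rfl
  rw [trunkPart_of_nil_notMem hd.2.1 (nil_notMem_rootCut _), subword_ownsSector_nil hd.2.1 hd.2.2]
  simp [charD, hcorolla]

theorem charD_trunkPart_eq_zero [Ring A] (φ : A → ℂ) {d : PTree × List A} (hd : GoodTree d)
    {c : Finset (List ℕ)} (hc : c ∈ cutsFinset d.1) (hnil : c ≠ {[]}) (hroot : c ≠ rootCut d.1) :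
    charD φ (trunkPart d c) = 0 := by
  have hmem := nil_notMem_of_mem_cutsFinset hc hnil
  have hcorolla : ¬ IsCorolla (trunkTree d.1 c) := fun h =>
    hroot (eq_rootCut_of_subset hc hmem ((isCorolla_trunkTree_iff hd.1 hd.2.1 hmem).1 h))
  rw [trunkPart_of_nil_notMem hd.2.1 hmem]
  simp [charD, hcorolla]

theorem convD_charD_singleton [Ring A] (φ : A → ℂ) {g : DForest A → ℂ} (hg : IsMultiplicative g)
    {d : PTree × List A} (hd : GoodTree d) : convD (charD φ) g [d] =
      g [d] + φ (subword d.2 (OwnsSector d.1 [])).prod * g (prunePart d (rootCut d.1)) := by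
  have hne : {[]} ≠ rootCut d.1 := fun h =>
    nil_notMem_rootCut d.1 (h ▸ Finset.mem_singleton_self [])
  rw [(isMultiplicative_charD φ).convD_singleton hg, Finset.sum_eq_add_of_mem {[]} (rootCut d.1)
    (singleton_nil_mem_cutsFinset hd.2.1) (rootCut_mem_cutsFinset d.1) hne fun c hc h => by
      rw [charD_trunkPart_eq_zero φ hd hc h.1 h.2, zero_mul]]
  rw [trunkPart_singleton_nil, (isMultiplicative_charD φ).map_nil, one_mul,
    hd.prunePart_singleton_nil, charD_trunkPart_rootCut φ hd]

open Classical in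
theorem prod_rootCut_node {M : Type*} [CommMonoid M] (cs : List PTree) (f : List ℕ → M) :
    ∏ v ∈ rootCut (node cs), f v =
      ∏ i : Fin cs.length, if cs[i.1] = leaf then 1 else f [i.1] := by
  have hroot : rootCut (node cs) =
      (Finset.univ.filter fun i : Fin cs.length => cs[i.1] ≠ leaf).image fun i => [i.1] := by
    ext v
    simp only [mem_rootCut, List.length_eq_one_iff, Finset.mem_image, Finset.mem_filter_univ]
    constructor
    · rintro ⟨hv, i, rfl⟩
      obtain ⟨hi, hne⟩ := isInternalAt_cons.1 hv
      exact ⟨⟨i, hi⟩, isInternalAt_nil.1 hne, rfl⟩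
    · rintro ⟨i, hne, rfl⟩
      exact ⟨isInternalAt_cons.2 ⟨i.2, isInternalAt_nil.2 hne⟩, i, rfl⟩
  rw [hroot, Finset.prod_image fun i _ j _ h => Fin.ext (by simpa using h), Finset.prod_filter]
  simp only [ite_not]

open Classical in
theorem IsMultiplicative.map_prunePart_rootCut {g : DForest A → ℂ} (hg : IsMultiplicative g)
    (cs : List PTree) (w : List A) :
    g (PTree.prunePart (PTree.node cs, w) (rootCut (PTree.node cs))) =
      ∏ i : Fin cs.length, if cs[i.1] = leaf then 1 else g [(cs[i.1], childWord cs w i)] := by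
  rw [hg.map_prunePart, prod_rootCut_node]
  refine Finset.prod_congr rfl fun i _ => ?_
  simp only [subtree!_cons i.2, subtree!_nil, leavesBefore_cons i, leavesBefore_nil, add_zero,
    childWord]

theorem GoodTree.child {cs : List PTree} {w : List A} (hd : GoodTree (PTree.node cs, w))
    (i : Fin cs.length) (hi : cs[i.1] ≠ leaf) : GoodTree (cs[i.1], childWord cs w i) := by
  have h := hd.subtree (v := [i.1]) (isInternalAt_cons.2 ⟨i.2, isInternalAt_nil.2 hi⟩)
  simpa only [childWord, subtree!_cons i.2, subtree!_nil, leavesBefore_cons i, leavesBefore_nil,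
    add_zero] using h

theorem convPowD_charD_singleton [Ring A] (φ : A → ℂ) (k : ℕ) {t : PTree} {w : List A}
    (hd : GoodTree (t, w)) : convPowD (charD φ) k [(t, w)] =
      (strictOrderPoly (Skeleton t) k : ℂ) * phiPi φ t w := by
  induction k generalizing t w with
  | zero =>
    obtain ⟨cs⟩ := t
    rw [strictOrderPoly_skeleton_node_zero (by simpa using hd.2.1)]
    simp [convPowD, epsD]
  | succ k ih =>
    obtain ⟨cs⟩ := t
    have hcs : cs ≠ [] := by simpa using hd.2.1
    have hchild (i : Fin cs.length) : (open Classical in if cs[i.1] = leaf then 1 else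
        convPowD (charD φ) k [(cs[i.1], childWord cs w i)]) =
        (strictOrderPoly (Skeleton cs[i.1]) k : ℂ) * phiPi φ cs[i.1] (childWord cs w i) := by
      split_ifs with hi
      · rw [hi, strictOrderPoly_of_isEmpty, phiPi_leaf, Nat.cast_one, one_mul]
      · exact ih (hd.child i hi)
    have hpow := (isMultiplicative_charD φ).convPowD k
    rw [convPowD, convD_charD_singleton φ hpow hd, hpow.map_prunePart_rootCut, ih hd,
      strictOrderPoly_skeleton_node_succ hcs, phiPi_node φ hcs]
    simp_rw [hchild, Finset.prod_mul_distrib]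
    push_cast
    ring

end Character

end PTree

theorem convolution_powers_on_decorated_schroder_trees_general {A : Type*} [Ring A] (φ : A → ℂ)
    {t : PTree} {w : List A} (hd : PTree.GoodTree (t, w)) (k : ℕ) :
    PTree.convPowD (PTree.charHatD φ) k [(t, w)] =
      (PTree.omegaSkK t k : ℂ) * PTree.phiPi φ t w := by
  have hchar : PTree.charD φ = PTree.charHatD φ + PTree.epsD := by
    ext F
    simp [PTree.charHatD]
  refine congrFun (eq_of_sum_choose_nsmul_eq
    (a := fun j => PTree.convPowD (PTree.charHatD φ) j [(t, w)])
    (b := fun j => (PTree.omegaSkK t j : ℂ) * PTree.phiPi φ t w) fun m => ?_) k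
  calc ∑ j ∈ Finset.range (m + 1), m.choose j • PTree.convPowD (PTree.charHatD φ) j [(t, w)]
      = PTree.convPowD (PTree.charD φ) m [(t, w)] := by
        rw [hchar, PTree.convPowD_add_epsD _ m (PTree.goodForest_singleton.2 hd)]
        simp
    _ = (strictOrderPoly (PTree.Skeleton t) m : ℂ) * PTree.phiPi φ t w :=
        PTree.convPowD_charD_singleton φ m hd
    _ = ∑ j ∈ Finset.range (m + 1),
          m.choose j • ((PTree.omegaSkK t j : ℂ) * PTree.phiPi φ t w) := by
        simp_rw [strictOrderPoly_eq_sum_choose, PTree.omegaSkK_eq_strictSurjCount, nsmul_eq_mul]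
        push_cast
        simp only [Finset.sum_mul, mul_assoc]

/-- Let `(A, φ)` be a noncommutative probability space, `Φ̃ : H_S(A) → ℂ`
the character extending `φ` and `Φ̂ = Φ̃ − ε_A`. For every `n ≥ 1`, every Schröder tree
`t ∈ ST(n)` decorated by a word `w = a_1 ⋯ a_n`, and every `k ≥ 1`:
`Φ̂^{*k}(t ⊗ w) = ω_k(sk(t)) · φ_{π(t)}(a_1,…,a_n)`. -/
theorem convolution_powers_on_decorated_schroder_trees
    (A : Type*) [Ring A] [Algebra ℂ A] (φ : A →ₗ[ℂ] ℂ) (hφ : φ 1 = 1)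
    (n : ℕ) (hn : 1 ≤ n) (t : PTree) (ht : t ∈ PTree.ST n)
    (w : List A) (hw : w.length = n) (k : ℕ) (hk : 1 ≤ k) :
    PTree.convPowD (PTree.charHatD (fun x => φ x)) k [(t, w)] =
      (PTree.omegaSkK t k : ℂ) * PTree.phiPi (fun x => φ x) t w := by
  exact convolution_powers_on_decorated_schroder_trees_general _
    (PTree.goodTree_of_mem_ST hn ht hw) k
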